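/- Let d ≥ 1, let σ > 0, let ω ∈ ℂ with Re ω > 0, let k ∈ ℝ^d, and let h : ℝ^d → ℂ be smooth and compactly supported. For v ∈ ℝ^d define u(v) = ∫_0^∞ ∫_{ℝ^d} (4πσt)^{−d/2} · exp( −t·ω − i·t·(k·(w+v))/2 − σ|k|²t³/12 − |w−v|²/(4σt) ) · h(w) dw dt. Then this double integral converges absolutely for every v, the function u is twice continuously differentiable, and it satisfies the resolvent equation ω·u(v) + i(k·v)·u(v) − σ·Δu(v) = h(v) for all v ∈ ℝ^d. -/

import Mathlib

open MeasureTheory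
open scoped ENNReal RealInnerProductSpace

/-- The Laplacian of a function `h : ℝ^d → ℂ`, as the sum of the second partial
derivatives in the coordinate directions. -/
noncomputable def lapC {d : ℕ} (h : EuclideanSpace ℝ (Fin d) → ℂ)
    (v : EuclideanSpace ℝ (Fin d)) : ℂ :=
  ∑ i : Fin d,
    fderiv ℝ (fun w => fderiv ℝ h w (EuclideanSpace.single i 1)) v (EuclideanSpace.single i 1)

/-- The Green's kernel for the resolvent of the transport-diffusion operator
`i k·v − σΔ` with spectral parameter `ω`. -/
noncomputable def greenKer (d : ℕ) (σ : ℝ) (ω : ℂ) (k : EuclideanSpace ℝ (Fin d))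
    (h : EuclideanSpace ℝ (Fin d) → ℂ) (v : EuclideanSpace ℝ (Fin d))
    (p : ℝ × EuclideanSpace ℝ (Fin d)) : ℂ :=
  (((4 * Real.pi * σ * p.1) ^ (-(d : ℝ) / 2) : ℝ) : ℂ) *
    Complex.exp (-(p.1 : ℂ) * ω - Complex.I * (p.1 : ℂ) * ((⟪k, p.2 + v⟫ : ℝ) : ℂ) / 2
      - (σ : ℂ) * ((‖k‖ : ℝ) : ℂ) ^ 2 * (p.1 : ℂ) ^ 3 / 12
      - ((‖p.2 - v‖ : ℝ) : ℂ) ^ 2 / (4 * (σ : ℂ) * (p.1 : ℂ))) *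
    h p.2

/-- The function defined by the Green's representation formula:
`u(v) = ∫_0^∞ ∫_{ℝ^d} greenKer(t, w) dw dt`. -/
noncomputable def greenSol (d : ℕ) (σ : ℝ) (ω : ℂ) (k : EuclideanSpace ℝ (Fin d))
    (h : EuclideanSpace ℝ (Fin d) → ℂ) (v : EuclideanSpace ℝ (Fin d)) : ℂ :=
  ∫ p in Set.Ioi (0 : ℝ) ×ˢ (Set.univ : Set (EuclideanSpace ℝ (Fin d))),
    greenKer d σ ω k h v p

/-!
The kernel at time `t` is a Gaussian in `w` up to a phase, so its Fourier transform in `w`,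
evaluated at `ξ`, is explicit: it is the wave `m (t, ξ) e^{-2πi (ξ + t k / 2π)·v}`, whose frequency
drifts along the characteristics of the transport term while diffusion damps its amplitude `m`. In
`t` this wave solves `∂ₜ M = -(ω + i k·v + 4π²σ |ξ + t k / 2π|²) M`. Writing `h` as the Fourier
transform of `φ` and moving the transform to the other factor, `u` becomes the superposition of the
waves with weights `φ ξ` over `t > 0`. The damping `|m| ≤ e^{-t Re ω}` and the moments of `φ` allow
differentiation under the integral sign, where `ω + i k·v - σ Δ` multiplies each wave by the bracket
above. The integrand is then `-∂ₜ M φ`, so integrating in `t` leaves only the initial waves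
`e^{-2πi ξ·v}`, whose superposition is `h`.
-/

open Complex Filter FourierTransform InnerProductSpace Laplacian Module Real Set Topology

variable {V E : Type*} [NormedAddCommGroup V] [InnerProductSpace ℝ V] [NormedAddCommGroup E]
  [NormedSpace ℂ E]

theorem laplacian_fourierIntegral_comp [FiniteDimensional ℝ V] {W : Type*} [NormedAddCommGroup W]
    [NormedSpace ℝ W] [MeasurableSpace W] [BorelSpace W] [SecondCountableTopology W]
    {μ : Measure W} (c : W →L[ℝ] V) {f : W → E}
    (hf : AEStronglyMeasurable f μ)
    (hmoment : ∀ n : ℕ, n ≤ 2 → Integrable (fun p ↦ ‖p‖ ^ n * ‖f p‖) μ) (v : V) :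
    Δ (VectorFourier.fourierIntegral 𝐞 μ (innerSL ℝ ∘L c).toLinearMap₁₂ f) v =
      ∫ p, 𝐞 (-⟪c p, v⟫) • -(4 * π ^ 2 * ‖c p‖ ^ 2) • f p ∂μ := by
  set L : W →L[ℝ] V →L[ℝ] ℝ := innerSL ℝ ∘L c
  have hL (p : W) (x : V) : L p x = ⟪c p, x⟫ := rfl
  let e := stdOrthonormalBasis ℝ V
  have hpow := VectorFourier.integrable_fourierPowSMulRight L (hmoment 2 le_rfl) hf
  have hterm (i : Fin (finrank ℝ V)) (p : W) :
      VectorFourier.fourierPowSMulRight L f p 2 ![e i, e i] =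
        -(4 * π ^ 2 * ⟪c p, e i⟫ ^ 2) • f p := by
    rw [VectorFourier.fourierPowSMulRight_apply, Fin.prod_univ_two, ← coe_smul, ← coe_smul,
      smul_smul]
    congr 1
    simp only [hL, Matrix.cons_val_zero, Matrix.cons_val_one, neg_sq, mul_pow, I_sq]
    push_cast
    ring
  have hsum (p : W) : ∑ i, VectorFourier.fourierPowSMulRight L f p 2 ![e i, e i] =
      -(4 * π ^ 2 * ‖c p‖ ^ 2) • f p := by
    simp only [hterm, ← Finset.sum_smul, Finset.sum_neg_distrib, ← Finset.mul_sum,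
      e.sum_sq_inner_left]
  have hintegrable (i : Fin (finrank ℝ V)) : Integrable
      (fun p ↦ 𝐞 (-L p v) • VectorFourier.fourierPowSMulRight L f p 2 ![e i, e i]) μ :=
    (fourierIntegral_convergent_iff' L v).2
      ((ContinuousMultilinearMap.apply ℝ (fun _ ↦ V) E ![e i, e i]).integrable_comp hpow)
  have hderiv := VectorFourier.iteratedFDeriv_fourierIntegral L (N := 2)
    (by exact_mod_cast hmoment) hf le_rfl
  simp only [laplacian_eq_iteratedFDeriv_orthonormalBasis _ e, hderiv,
    fourierIntegral_continuousMultilinearMap_apply' hpow]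
  change ∑ i, ∫ p, 𝐞 (-L p v) • VectorFourier.fourierPowSMulRight L f p 2 ![e i, e i] ∂μ = _
  rw [← integral_finsetSum _ fun i _ ↦ hintegrable i]
  simp only [← Finset.smul_sum, hsum, hL]

/-- The Gaussian heat kernel at time `s`: the density of the semigroup `exp (s Δ)`. -/
noncomputable def heatKernel (s : ℝ) (x : V) : ℝ :=
  (4 * π * s) ^ (-(finrank ℝ V : ℝ) / 2) * rexp (-(‖x‖ ^ 2 / (4 * s)))

theorem heatKernel_nonneg {s : ℝ} (hs : 0 ≤ s) (x : V) : 0 ≤ heatKernel s x := by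
  unfold heatKernel
  positivity

theorem ofReal_heatKernel (s : ℝ) (x : V) :
    (heatKernel s x : ℂ) = ((4 * π * s) ^ (-(finrank ℝ V : ℝ) / 2) : ℝ) *
      cexp (-((4 * s)⁻¹ : ℝ) * ‖x‖ ^ 2) := by
  rw [heatKernel, ofReal_mul, ofReal_exp]
  push_cast
  ring_nf

/-- The kernel `K_t(v, w)` of the semigroup `exp (-t (ω + i k·v - σ Δ))`, as a function of
`p = (t, w)`: a heat kernel at time `σ t`, times a damping and a phase factor. -/
noncomputable def transportKernel (σ : ℝ) (ω : ℂ) (k v : V) (p : ℝ × V) : ℂ :=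
  cexp (-p.1 * ω - I * p.1 * ⟪k, p.2 + v⟫ / 2 - σ * ‖k‖ ^ 2 * p.1 ^ 3 / 12) *
    heatKernel (σ * p.1) (p.2 - v)

theorem norm_transportKernel_le {σ : ℝ} (hσ : 0 ≤ σ) (ω : ℂ) (k v : V) {t : ℝ} (ht : 0 ≤ t)
    (w : V) :
    ‖transportKernel σ ω k v (t, w)‖ ≤ rexp (-ω.re * t) * heatKernel (σ * t) (w - v) := by
  have hdamping : 0 ≤ σ * ‖k‖ ^ 2 * t ^ 3 / 12 := by positivity
  have hexponent : -t * ω - I * t * ⟪k, w + v⟫ / 2 - σ * ‖k‖ ^ 2 * t ^ 3 / 12 =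
      -t * ω - (t * ⟪k, w + v⟫ / 2 : ℝ) * I - (σ * ‖k‖ ^ 2 * t ^ 3 / 12 : ℝ) := by
    push_cast; ring
  have hheat := heatKernel_nonneg (mul_nonneg hσ ht) (w - v)
  rw [transportKernel, norm_mul, norm_exp, norm_real, Real.norm_of_nonneg hheat, hexponent]
  gcongr
  simp only [sub_re, neg_mul, neg_re, mul_re, ofReal_re, ofReal_im, I_re, I_im]
  linarith

/-- The frequency, at time `t`, of the plane wave of initial frequency `ξ` under the transport
`i k·v`, as a linear map of `p = (t, ξ)`. -/
noncomputable def driftedFrequency (k : V) : ℝ × V →L[ℝ] V :=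
  .snd ℝ ℝ V + (ContinuousLinearMap.fst ℝ ℝ V).smulRight ((2 * π)⁻¹ • k)

theorem driftedFrequency_apply (k : V) (p : ℝ × V) :
    driftedFrequency k p = p.2 + (p.1 / (2 * π)) • k := by
  simp [driftedFrequency, smul_smul, div_eq_mul_inv]

theorem norm_driftedFrequency_sq (k : V) (p : ℝ × V) :
    4 * π ^ 2 * ‖driftedFrequency k p‖ ^ 2 =
      4 * π ^ 2 * ‖p.2‖ ^ 2 + 4 * π * p.1 * ⟪p.2, k⟫ + p.1 ^ 2 * ‖k‖ ^ 2 := by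
  rw [driftedFrequency_apply, norm_add_sq_real, inner_smul_right, norm_smul, mul_pow,
    Real.norm_eq_abs, sq_abs]
  field_simp
  ring

/-- The time integral `∫ s in 0..t, 4 π² ‖driftedFrequency k (s, ξ)‖²` of the diffusive damping
rate, at `p = (t, ξ)`, with the square completed. -/
noncomputable def dissipation (k : V) (p : ℝ × V) : ℝ :=
  4 * π ^ 2 * p.1 * ‖p.2 + (p.1 / (4 * π)) • k‖ ^ 2 + p.1 ^ 3 * ‖k‖ ^ 2 / 12

theorem dissipation_nonneg (k : V) {p : ℝ × V} (hp : 0 ≤ p.1) : 0 ≤ dissipation k p := by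
  unfold dissipation
  positivity

theorem dissipation_eq (k : V) (p : ℝ × V) :
    dissipation k p =
      4 * π ^ 2 * ‖p.2‖ ^ 2 * p.1 + 2 * π * ⟪p.2, k⟫ * p.1 ^ 2 + ‖k‖ ^ 2 / 3 * p.1 ^ 3 := by
  rw [dissipation, norm_add_sq_real, inner_smul_right, norm_smul, mul_pow, Real.norm_eq_abs, sq_abs]
  field_simp
  ring

theorem hasDerivAt_dissipation (k ξ : V) (t : ℝ) :
    HasDerivAt (fun s ↦ dissipation k (s, ξ)) (4 * π ^ 2 * ‖driftedFrequency k (t, ξ)‖ ^ 2) t := by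
  simp only [dissipation_eq, norm_driftedFrequency_sq]
  have hlin := (hasDerivAt_id t).const_mul (4 * π ^ 2 * ‖ξ‖ ^ 2)
  have hquad := (hasDerivAt_pow 2 t).const_mul (2 * π * ⟪ξ, k⟫)
  have hcubic := (hasDerivAt_pow 3 t).const_mul (‖k‖ ^ 2 / 3)
  refine ((hlin.add hquad).add hcubic).congr_deriv ?_
  push_cast
  ring

/-- The amplitude, at time `t`, of the solution of the transport-diffusion equation
`∂ₜ u + (ω + i k·v - σ Δ) u = 0` whose initial datum is a plane wave of frequency `ξ`. -/
noncomputable def dampingFactor (σ : ℝ) (ω : ℂ) (k : V) (p : ℝ × V) : ℂ :=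
  cexp (-(p.1 * ω + σ * dissipation k p))

theorem norm_dampingFactor_le {σ : ℝ} (hσ : 0 ≤ σ) (ω : ℂ) (k : V) {p : ℝ × V} (hp : 0 ≤ p.1) :
    ‖dampingFactor σ ω k p‖ ≤ rexp (-ω.re * p.1) := by
  have hdissipation : 0 ≤ σ * dissipation k p := mul_nonneg hσ (dissipation_nonneg k hp)
  rw [dampingFactor, norm_exp]
  gcongr
  simp only [neg_re, add_re, mul_re, ofReal_re, ofReal_im]
  linarith

theorem continuous_dampingFactor (σ : ℝ) (ω : ℂ) (k : V) : Continuous (dampingFactor σ ω k) := by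
  unfold dampingFactor dissipation
  fun_prop

/-- The solution of `∂ₜ u + (ω + i k·v - σ Δ) u = 0` whose initial datum is the plane wave
`v ↦ 𝐞 (-⟪ξ, v⟫)`, at the point `v` and as a function of `p = (t, ξ)`. -/
noncomputable def planeWave (σ : ℝ) (ω : ℂ) (k v : V) (p : ℝ × V) : ℂ :=
  𝐞 (-⟪driftedFrequency k p, v⟫) • dampingFactor σ ω k p

theorem planeWave_zero (σ : ℝ) (ω : ℂ) (k v ξ : V) : planeWave σ ω k v (0, ξ) = 𝐞 (-⟪ξ, v⟫) := by
  simp [planeWave, dampingFactor, dissipation, driftedFrequency_apply, Circle.smul_def]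

theorem norm_planeWave_le {σ : ℝ} (hσ : 0 ≤ σ) (ω : ℂ) (k v : V) {p : ℝ × V} (hp : 0 ≤ p.1) :
    ‖planeWave σ ω k v p‖ ≤ rexp (-ω.re * p.1) := by
  rw [planeWave, Circle.norm_smul]
  exact norm_dampingFactor_le hσ ω k hp

theorem tendsto_planeWave_atTop {σ : ℝ} (hσ : 0 ≤ σ) {ω : ℂ} (hω : 0 < ω.re) (k v ξ : V) :
    Tendsto (fun t ↦ planeWave σ ω k v (t, ξ)) atTop (𝓝 0) := by
  have hdecay : Tendsto (fun t : ℝ ↦ rexp (-ω.re * t)) atTop (𝓝 0) :=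
    tendsto_exp_atBot.comp (tendsto_id.const_mul_atTop_of_neg (neg_neg_of_pos hω))
  refine squeeze_zero_norm' ?_ hdecay
  filter_upwards [eventually_ge_atTop 0] with t ht using norm_planeWave_le hσ ω k v ht

/-- The symbol of the operator `ω + i k·v - σ Δ` at the point `v` and the frequency
`driftedFrequency k p`. -/
noncomputable def resolventSymbol (σ : ℝ) (ω : ℂ) (k v : V) (p : ℝ × V) : ℂ :=
  ω + I * ⟪k, v⟫ + σ * (4 * π ^ 2 * ‖driftedFrequency k p‖ ^ 2 : ℝ)

theorem hasDerivAt_planeWave (σ : ℝ) (ω : ℂ) (k v ξ : V) (t : ℝ) :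
    HasDerivAt (fun s ↦ planeWave σ ω k v (s, ξ))
      (-(resolventSymbol σ ω k v (t, ξ) * planeWave σ ω k v (t, ξ))) t := by
  have hexp (s : ℝ) : planeWave σ ω k v (s, ξ) =
      cexp (-(2 * π * ⟪ξ, v⟫ * I + s * (I * ⟪k, v⟫ + ω) + σ * dissipation k (s, ξ))) := by
    rw [planeWave, dampingFactor, Circle.smul_def, fourierChar_apply, smul_eq_mul,
      ← Complex.exp_add, driftedFrequency_apply, inner_add_left, inner_smul_left]
    congr 1
    push_cast
    simp only [ofReal_div, ofReal_mul, ofReal_ofNat, conj_trivial]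
    field_simp
    ring
  have hlin := (hasDerivAt_id t).ofReal_comp.mul_const (I * (⟪k, v⟫ : ℂ) + ω)
  have hdiss := (hasDerivAt_dissipation k ξ t).ofReal_comp.const_mul (σ : ℂ)
  simp only [hexp]
  refine ((hlin.const_add (2 * π * ⟪ξ, v⟫ * I)).add hdiss).neg.cexp.congr_deriv ?_
  simp only [id, Pi.neg_apply, Pi.add_apply, ofReal_one, resolventSymbol]
  ring

theorem integral_resolventSymbol_mul_planeWave {σ : ℝ} (hσ : 0 ≤ σ) {ω : ℂ} (hω : 0 < ω.re)
    (k v ξ : V) (hint : IntegrableOn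
      (fun t ↦ resolventSymbol σ ω k v (t, ξ) * planeWave σ ω k v (t, ξ)) (Ioi 0)) :
    ∫ t in Ioi 0, resolventSymbol σ ω k v (t, ξ) * planeWave σ ω k v (t, ξ) = 𝐞 (-⟪ξ, v⟫) := by
  have hftc := integral_Ioi_of_hasDerivAt_of_tendsto'
    (fun t _ ↦ hasDerivAt_planeWave σ ω k v ξ t) hint.neg (tendsto_planeWave_atTop hσ hω k v ξ)
  rwa [integral_neg, planeWave_zero, zero_sub, neg_inj] at hftc

theorem resolventSymbol_mul_planeWave_smul (σ : ℝ) (ω : ℂ) (k v : V) (p : ℝ × V) (x : E) :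
    (resolventSymbol σ ω k v p * planeWave σ ω k v p) • x =
      (ω + I * ⟪k, v⟫) • 𝐞 (-⟪driftedFrequency k p, v⟫) • dampingFactor σ ω k p • x -
        σ • 𝐞 (-⟪driftedFrequency k p, v⟫) •
          -(4 * π ^ 2 * ‖driftedFrequency k p‖ ^ 2) • dampingFactor σ ω k p • x := by
  simp only [resolventSymbol, planeWave, Circle.smul_def, ← coe_smul (E := E), smul_smul,
    ← sub_smul, smul_eq_mul]
  push_cast
  ring_nf

theorem fourierChar_smul_transportKernel_add (σ : ℝ) (ω : ℂ) (k v ξ : V) (t : ℝ) (y : V) :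
    𝐞 (-⟪y + v, ξ⟫) • transportKernel σ ω k v (t, y + v) =
      𝐞 (-⟪driftedFrequency k (t, ξ), v⟫) • cexp (-(t * ω + σ * (t ^ 3 * ‖k‖ ^ 2 / 12))) *
        (𝐞 (-⟪y, ξ + (t / (4 * π)) • k⟫) • heatKernel (σ * t) y : ℂ) := by
  simp only [transportKernel, Circle.smul_def, fourierChar_apply, smul_eq_mul, add_sub_cancel_right,
    ← mul_assoc, ← Complex.exp_add]
  congr 2
  simp only [driftedFrequency_apply, inner_add_left, inner_add_right, inner_smul_left,
    inner_smul_right, conj_trivial, real_inner_comm y k, real_inner_comm v ξ]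
  push_cast
  field_simp
  ring

variable [MeasurableSpace V] [BorelSpace V]

@[fun_prop]
theorem measurable_heatKernel {α : Type*} [MeasurableSpace α] {s : α → ℝ} {x : α → V}
    (hs : Measurable s) (hx : Measurable x) : Measurable fun a ↦ heatKernel (s a) (x a) := by
  unfold heatKernel
  fun_prop

variable [FiniteDimensional ℝ V]

theorem integrable_heatKernel {s : ℝ} (hs : 0 < s) : Integrable (heatKernel s : V → ℝ) := by
  have hb : 0 < (((4 * s)⁻¹ : ℝ) : ℂ).re := by rw [ofReal_re]; positivity
  have hgauss := GaussianFourier.integrable_cexp_neg_mul_sq_norm_add hb 0 (0 : V)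
  simp only [zero_mul, add_zero] at hgauss
  refine (hgauss.const_mul (((4 * π * s) ^ (-(finrank ℝ V : ℝ) / 2) : ℝ) : ℂ)).re.congr ?_
  filter_upwards with x
  rw [← ofReal_heatKernel, RCLike.re_eq_complex_re, ofReal_re]

theorem fourier_heatKernel {s : ℝ} (hs : 0 < s) (ξ : V) :
    𝓕 (fun x : V ↦ (heatKernel s x : ℂ)) ξ = cexp (-(4 * π ^ 2 * s * ‖ξ‖ ^ 2)) := by
  have hb : 0 < (((4 * s)⁻¹ : ℝ) : ℂ).re := by rw [ofReal_re]; positivity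
  have hs' : (s : ℂ) ≠ 0 := ofReal_ne_zero.2 hs.ne'
  have hbase : (π : ℂ) / ((4 * s)⁻¹ : ℝ) = (4 * π * s : ℝ) := by push_cast; field_simp
  have hnormalized : (((4 * π * s) ^ (-(finrank ℝ V : ℝ) / 2) : ℝ) : ℂ) *
      (π / ((4 * s)⁻¹ : ℝ)) ^ (finrank ℝ V / 2 : ℂ) = 1 := by
    have hexp : (finrank ℝ V / 2 : ℂ) = ((finrank ℝ V / 2 : ℝ) : ℂ) := by push_cast; rfl
    rw [hbase, hexp, ← ofReal_cpow (by positivity), ← ofReal_mul, ← rpow_add (by positivity),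
      neg_div, neg_add_cancel, rpow_zero, ofReal_one]
  have hgauss := fourier_gaussian_innerProductSpace hb ξ
  rw [Real.fourier_eq] at hgauss ⊢
  simp only [Circle.smul_def, smul_eq_mul, ofReal_heatKernel,
    mul_left_comm _ (ofReal _)] at hgauss ⊢
  rw [integral_const_mul, hgauss, ← mul_assoc, hnormalized, one_mul]
  congr 1
  push_cast
  field_simp

theorem integral_heatKernel {s : ℝ} (hs : 0 < s) : ∫ x : V, heatKernel s x = 1 := by
  have hzero := fourier_heatKernel hs (0 : V)
  rw [Real.fourier_eq] at hzero
  simpa [integral_complex_ofReal] using hzero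

theorem measurable_transportKernel (σ : ℝ) (ω : ℂ) (k v : V) :
    Measurable (transportKernel σ ω k v) := by
  unfold transportKernel
  fun_prop

/-- Lebesgue measure on the half-space `t > 0` of `ℝ × V`, in product form for Fubini. -/
noncomputable abbrev halfSpaceMeasure (V : Type*) [NormedAddCommGroup V] [InnerProductSpace ℝ V]
    [FiniteDimensional ℝ V] [MeasurableSpace V] [BorelSpace V] : Measure (ℝ × V) :=
  (volume.restrict (Ioi 0)).prod volume

theorem volume_restrict_Ioi_prod_univ :
    volume.restrict (Ioi (0 : ℝ) ×ˢ (univ : Set V)) = halfSpaceMeasure V := by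
  rw [Measure.volume_eq_prod, ← Measure.prod_restrict, Measure.restrict_univ]

theorem ae_halfSpaceMeasure_fst_pos : ∀ᵐ p ∂halfSpaceMeasure V, 0 < p.1 := by
  rw [← volume_restrict_Ioi_prod_univ]
  filter_upwards [ae_restrict_mem (measurableSet_Ioi.prod .univ)] with p hp using hp.1

theorem integrable_exp_mul_heatKernel {σ r : ℝ} (hσ : 0 < σ) (hr : 0 < r) (v : V) :
    Integrable (fun p : ℝ × V ↦ rexp (-r * p.1) * heatKernel (σ * p.1) (p.2 - v))
      (halfSpaceMeasure V) := by
  refine (integrable_prod_iff (by fun_prop)).2 ⟨?_, ?_⟩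
  · filter_upwards [ae_restrict_mem measurableSet_Ioi] with t ht
    exact ((integrable_heatKernel (mul_pos hσ ht)).comp_sub_right v).const_mul _
  · refine (exp_neg_integrableOn_Ioi 0 hr).congr ?_
    filter_upwards [ae_restrict_mem measurableSet_Ioi] with t ht
    have hst : 0 < σ * t := mul_pos hσ ht
    simp_rw [norm_mul, Real.norm_of_nonneg (exp_pos _).le,
      Real.norm_of_nonneg (heatKernel_nonneg hst.le _)]
    rw [integral_const_mul, integral_sub_right_eq_self (heatKernel (σ * t)) v,
      integral_heatKernel hst, mul_one]

theorem integrable_transportKernel {σ : ℝ} (hσ : 0 < σ) {ω : ℂ} (hω : 0 < ω.re) (k v : V) :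
    Integrable (transportKernel σ ω k v) (halfSpaceMeasure V) := by
  refine (integrable_exp_mul_heatKernel hσ hω v).mono'
    (measurable_transportKernel σ ω k v).aestronglyMeasurable ?_
  filter_upwards [ae_halfSpaceMeasure_fst_pos] with p hp
  exact norm_transportKernel_le hσ.le ω k v hp.le p.2

theorem integrable_transportKernel_section {σ : ℝ} (hσ : 0 < σ) (ω : ℂ) (k v : V) {t : ℝ}
    (ht : 0 < t) : Integrable fun w ↦ transportKernel σ ω k v (t, w) := by
  refine (((integrable_heatKernel (mul_pos hσ ht)).comp_sub_right v).const_mul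
    (rexp (-ω.re * t))).mono'
    ((measurable_transportKernel σ ω k v).comp measurable_prodMk_left).aestronglyMeasurable ?_
  filter_upwards with w using norm_transportKernel_le hσ.le ω k v ht.le w

theorem fourier_transportKernel {σ : ℝ} (hσ : 0 < σ) (ω : ℂ) (k v : V) {t : ℝ} (ht : 0 < t)
    (ξ : V) : 𝓕 (fun w ↦ transportKernel σ ω k v (t, w)) ξ = planeWave σ ω k v (t, ξ) := by
  have hheat := fourier_heatKernel (mul_pos hσ ht) (ξ + (t / (4 * π)) • k)
  rw [Real.fourier_eq] at hheat ⊢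
  rw [← integral_add_right_eq_self _ v]
  simp only [fourierChar_smul_transportKernel_add]
  rw [integral_const_mul, hheat, planeWave, dampingFactor, dissipation, smul_mul_assoc,
    ← Complex.exp_add]
  congr 2
  push_cast
  ring

theorem integrable_transportKernel_smul {σ : ℝ} (hσ : 0 < σ) {ω : ℂ} (hω : 0 < ω.re) (k v : V)
    {h : V → E} (hh : AEStronglyMeasurable h) {C : ℝ} (hC : ∀ w, ‖h w‖ ≤ C) :
    Integrable (fun p ↦ transportKernel σ ω k v p • h p.2) (halfSpaceMeasure V) :=
  (integrable_transportKernel hσ hω k v).smul_bdd C hh.comp_snd (.of_forall fun p ↦ hC p.2)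

theorem integrableOn_Ioi_pow_mul_exp_neg_mul (n : ℕ) {r : ℝ} (hr : 0 < r) :
    IntegrableOn (fun t ↦ t ^ n * rexp (-r * t)) (Ioi 0) := by
  have hn : (-1 : ℝ) < n := by linarith [n.cast_nonneg (α := ℝ)]
  simpa using integrableOn_rpow_mul_exp_neg_mul_rpow hn one_pos hr

theorem integrable_norm_pow_mul_dampingFactor_smul {σ : ℝ} (hσ : 0 ≤ σ) {ω : ℂ} (hω : 0 < ω.re)
    (k : V) {φ : V → E} (hφ : Integrable φ) {n : ℕ}
    (hmoment : Integrable fun ξ ↦ ‖ξ‖ ^ n * ‖φ ξ‖) :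
    Integrable (fun p ↦ ‖p‖ ^ n * ‖dampingFactor σ ω k p • φ p.2‖) (halfSpaceMeasure V) := by
  have htime := Integrable.mul_prod (integrableOn_Ioi_pow_mul_exp_neg_mul n hω) hφ.norm
  have hspace := Integrable.mul_prod (integrableOn_Ioi_pow_mul_exp_neg_mul 0 hω) hmoment
  refine (htime.add hspace).mono' ?_ ?_
  · exact (continuous_norm.pow n).aestronglyMeasurable.mul
      ((continuous_dampingFactor σ ω k).aestronglyMeasurable.smul
        hφ.aestronglyMeasurable.comp_snd).norm
  filter_upwards [ae_halfSpaceMeasure_fst_pos] with p hp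
  have hnorm : ‖p‖ ^ n ≤ p.1 ^ n + ‖p.2‖ ^ n := by
    rw [Prod.norm_def, Real.norm_of_nonneg hp.le]
    rcases max_choice p.1 ‖p.2‖ with h | h <;> rw [h]
    · exact le_add_of_nonneg_right (by positivity)
    · exact le_add_of_nonneg_left (pow_nonneg hp.le n)
  rw [Real.norm_of_nonneg (by positivity), norm_smul]
  calc ‖p‖ ^ n * (‖dampingFactor σ ω k p‖ * ‖φ p.2‖)
      ≤ (p.1 ^ n + ‖p.2‖ ^ n) * (rexp (-ω.re * p.1) * ‖φ p.2‖) := by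
        gcongr
        exact norm_dampingFactor_le hσ ω k hp.le
    _ = p.1 ^ n * rexp (-ω.re * p.1) * ‖φ p.2‖ +
          p.1 ^ 0 * rexp (-ω.re * p.1) * (‖p.2‖ ^ n * ‖φ p.2‖) := by ring

theorem integrable_transportKernel_smul_fourier {σ : ℝ} (hσ : 0 < σ) {ω : ℂ} (hω : 0 < ω.re)
    (k v : V) {φ : V → E} (hφ : Integrable φ) :
    Integrable (fun p ↦ transportKernel σ ω k v p • 𝓕 φ p.2) (halfSpaceMeasure V) :=
  have hcontinuous : Continuous (𝓕 φ) :=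
    VectorFourier.fourierIntegral_continuous continuous_fourierChar continuous_inner hφ
  integrable_transportKernel_smul hσ hω k v hcontinuous.aestronglyMeasurable
    (VectorFourier.norm_fourierIntegral_le_integral_norm 𝐞 volume (innerₗ V) φ)

theorem integrable_dampingFactor_smul {σ : ℝ} (hσ : 0 ≤ σ) {ω : ℂ} (hω : 0 < ω.re) (k : V)
    {φ : V → E} (hφ : Integrable φ) :
    Integrable (fun p ↦ dampingFactor σ ω k p • φ p.2) (halfSpaceMeasure V) := by
  have hnorm := integrable_norm_pow_mul_dampingFactor_smul (n := 0) hσ hω k hφ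
    (by simpa using hφ.norm)
  simp only [pow_zero, one_mul] at hnorm
  exact (integrable_norm_iff ((continuous_dampingFactor σ ω k).aestronglyMeasurable.smul
    hφ.aestronglyMeasurable.comp_snd)).1 hnorm

theorem integrable_norm_sq_smul_dampingFactor_smul {σ : ℝ} (hσ : 0 ≤ σ) {ω : ℂ} (hω : 0 < ω.re)
    (k : V) {φ : V → E} (hφ : Integrable φ) (hmoment : Integrable fun ξ ↦ ‖ξ‖ ^ 2 * ‖φ ξ‖) :
    Integrable (fun p ↦ -(4 * π ^ 2 * ‖driftedFrequency k p‖ ^ 2) • dampingFactor σ ω k p • φ p.2)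
      (halfSpaceMeasure V) := by
  refine ((integrable_norm_pow_mul_dampingFactor_smul hσ hω k hφ hmoment).const_mul
    (4 * π ^ 2 * ‖driftedFrequency k‖ ^ 2)).mono' ?_ (.of_forall fun p ↦ ?_)
  · have hcontinuous : Continuous fun p ↦ -(4 * π ^ 2 * ‖driftedFrequency k p‖ ^ 2) := by fun_prop
    exact hcontinuous.aestronglyMeasurable.smul
      (integrable_dampingFactor_smul hσ hω k hφ).aestronglyMeasurable
  · have hdrift := (driftedFrequency k).le_opNorm p
    rw [norm_smul, norm_neg, Real.norm_of_nonneg (by positivity), ← mul_assoc,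
      mul_assoc (4 * π ^ 2) (_ ^ 2) (_ ^ 2), ← mul_pow]
    gcongr

/-- The resolvent `(ω + i k·v - σ Δ)⁻¹ h` as the Laplace transform in time of the semigroup with
kernel `transportKernel`. -/
noncomputable def resolventIntegral (σ : ℝ) (ω : ℂ) (k : V) (h : V → E) (v : V) : E :=
  ∫ p in Ioi (0 : ℝ) ×ˢ (univ : Set V), transportKernel σ ω k v p • h p.2

variable [CompleteSpace E]

theorem integral_transportKernel_smul_fourier {σ : ℝ} (hσ : 0 < σ) (ω : ℂ) (k v : V) {t : ℝ}
    (ht : 0 < t) {φ : V → E} (hφ : Integrable φ) :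
    ∫ w, transportKernel σ ω k v (t, w) • 𝓕 φ w = ∫ ξ, planeWave σ ω k v (t, ξ) • φ ξ := by
  have hflip : (innerₗ V).flip = innerₗ V := by ext x y; exact real_inner_comm x y
  have hselfAdjoint := VectorFourier.integral_fourierIntegral_smul_eq_flip (L := innerₗ V)
    continuous_fourierChar continuous_inner (integrable_transportKernel_section hσ ω k v ht) hφ
  rw [hflip] at hselfAdjoint
  simp only [← fourier_transportKernel hσ ω k v ht]
  exact hselfAdjoint.symm

theorem resolventIntegral_fourier {σ : ℝ} (hσ : 0 < σ) {ω : ℂ} (hω : 0 < ω.re) (k : V)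
    {φ : V → E} (hφ : Integrable φ) :
    resolventIntegral σ ω k (𝓕 φ) =
      VectorFourier.fourierIntegral 𝐞 (halfSpaceMeasure V)
        (innerSL ℝ ∘L driftedFrequency k).toLinearMap₁₂
        (fun p ↦ dampingFactor σ ω k p • φ p.2) := by
  ext v
  have hmode : Integrable (fun p ↦ 𝐞 (-⟪driftedFrequency k p, v⟫) • dampingFactor σ ω k p • φ p.2)
      (halfSpaceMeasure V) :=
    (fourierIntegral_convergent_iff' (innerSL ℝ ∘L driftedFrequency k) v).2
      (integrable_dampingFactor_smul hσ.le hω k hφ)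
  calc resolventIntegral σ ω k (𝓕 φ) v
      = ∫ t in Ioi 0, ∫ w, transportKernel σ ω k v (t, w) • 𝓕 φ w := by
        rw [resolventIntegral, volume_restrict_Ioi_prod_univ,
          integral_prod _ (integrable_transportKernel_smul_fourier hσ hω k v hφ)]
    _ = ∫ t in Ioi 0, ∫ ξ, planeWave σ ω k v (t, ξ) • φ ξ :=
        setIntegral_congr_fun measurableSet_Ioi fun t ht ↦
          integral_transportKernel_smul_fourier hσ ω k v ht hφ
    _ = ∫ p, 𝐞 (-⟪driftedFrequency k p, v⟫) • dampingFactor σ ω k p • φ p.2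
          ∂halfSpaceMeasure V := by
        simp only [integral_prod _ hmode, planeWave, smul_assoc]

theorem integral_resolventSymbol_mul_planeWave_smul {σ : ℝ} (hσ : 0 ≤ σ) {ω : ℂ} (hω : 0 < ω.re)
    (k v : V) {φ : V → E} (hint : Integrable
      (fun p ↦ (resolventSymbol σ ω k v p * planeWave σ ω k v p) • φ p.2) (halfSpaceMeasure V)) :
    ∫ p, (resolventSymbol σ ω k v p * planeWave σ ω k v p) • φ p.2 ∂halfSpaceMeasure V =
      𝓕 φ v := by
  rw [integral_prod_symm _ hint, Real.fourier_eq]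
  refine integral_congr_ae ?_
  filter_upwards [hint.prod_left_ae] with ξ hξ
  rw [integral_smul_const]
  obtain hzero | hφξ := eq_or_ne (φ ξ) 0
  · simp [hzero]
  · rw [integral_resolventSymbol_mul_planeWave hσ hω k v ξ ((integrable_smul_const hφξ).1 hξ),
      Circle.smul_def]

theorem laplacian_resolventIntegral_fourier {σ : ℝ} (hσ : 0 < σ) {ω : ℂ} (hω : 0 < ω.re) (k : V)
    {φ : V → E} (hφ : Integrable φ) (hmoment : ∀ n : ℕ, n ≤ 2 → Integrable fun ξ ↦ ‖ξ‖ ^ n * ‖φ ξ‖)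
    (v : V) :
    Δ (resolventIntegral σ ω k (𝓕 φ)) v =
      ∫ p, 𝐞 (-⟪driftedFrequency k p, v⟫) • -(4 * π ^ 2 * ‖driftedFrequency k p‖ ^ 2) •
        dampingFactor σ ω k p • φ p.2 ∂halfSpaceMeasure V := by
  rw [resolventIntegral_fourier hσ hω k hφ]
  exact laplacian_fourierIntegral_comp _
    (integrable_dampingFactor_smul hσ.le hω k hφ).aestronglyMeasurable
    (fun n hn ↦ integrable_norm_pow_mul_dampingFactor_smul hσ.le hω k hφ (hmoment n hn)) v

theorem resolvent_equation {σ : ℝ} (hσ : 0 < σ) {ω : ℂ} (hω : 0 < ω.re) (k : V) {φ : V → E}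
    (hφ : Integrable φ) (hmoment : ∀ n : ℕ, n ≤ 2 → Integrable fun ξ ↦ ‖ξ‖ ^ n * ‖φ ξ‖) (v : V) :
    (ω + I * ⟪k, v⟫) • resolventIntegral σ ω k (𝓕 φ) v -
      σ • Δ (resolventIntegral σ ω k (𝓕 φ)) v = 𝓕 φ v := by
  let L := innerSL ℝ ∘L driftedFrequency k
  let u (p : ℝ × V) : E := 𝐞 (-⟪driftedFrequency k p, v⟫) • dampingFactor σ ω k p • φ p.2
  let Δu (p : ℝ × V) : E := 𝐞 (-⟪driftedFrequency k p, v⟫) •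
    -(4 * π ^ 2 * ‖driftedFrequency k p‖ ^ 2) • dampingFactor σ ω k p • φ p.2
  have hu : Integrable u (halfSpaceMeasure V) :=
    (fourierIntegral_convergent_iff' L v).2 (integrable_dampingFactor_smul hσ.le hω k hφ)
  have hΔu : Integrable Δu (halfSpaceMeasure V) := (fourierIntegral_convergent_iff' L v).2
    (integrable_norm_sq_smul_dampingFactor_smul hσ.le hω k hφ (hmoment 2 le_rfl))
  have hint : Integrable (fun p ↦ (resolventSymbol σ ω k v p * planeWave σ ω k v p) • φ p.2)
      (halfSpaceMeasure V) := by
    simp only [resolventSymbol_mul_planeWave_smul]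
    exact (hu.smul _).sub (hΔu.smul σ)
  calc (ω + I * ⟪k, v⟫) • resolventIntegral σ ω k (𝓕 φ) v -
        σ • Δ (resolventIntegral σ ω k (𝓕 φ)) v
      = (ω + I * ⟪k, v⟫) • (∫ p, u p ∂halfSpaceMeasure V) - σ • ∫ p, Δu p ∂halfSpaceMeasure V := by
        rw [laplacian_resolventIntegral_fourier hσ hω k hφ hmoment,
          resolventIntegral_fourier hσ hω k hφ]
        rfl
    _ = ∫ p, (ω + I * ⟪k, v⟫) • u p - σ • Δu p ∂halfSpaceMeasure V := by
        rw [integral_sub (hu.fun_smul _) (hΔu.fun_smul σ), integral_smul, integral_smul]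
    _ = ∫ p, (resolventSymbol σ ω k v p * planeWave σ ω k v p) • φ p.2 ∂halfSpaceMeasure V := by
        simp only [resolventSymbol_mul_planeWave_smul, u, Δu]
    _ = 𝓕 φ v := integral_resolventSymbol_mul_planeWave_smul hσ.le hω k v hint

theorem exists_schwartzMap_fourier_eq {h : V → E} (hsmooth : ContDiff ℝ (⊤ : ℕ∞) h)
    (hsupport : HasCompactSupport h) : ∃ φ : SchwartzMap V E, 𝓕 ⇑φ = h := by
  refine ⟨𝓕⁻ (hsupport.toSchwartzMap hsmooth), ?_⟩
  rw [← SchwartzMap.fourier_coe, FourierTransform.fourier_fourierInv_eq]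
  rfl

theorem stmt6_general {N : ℕ∞} (hN : 2 ≤ N) {σ : ℝ} (hσ : 0 < σ) {ω : ℂ} (hω : 0 < ω.re) (k : V)
    {φ : V → E} (hmeas : AEStronglyMeasurable φ)
    (hmoment : ∀ n : ℕ, n ≤ N → Integrable fun ξ ↦ ‖ξ‖ ^ n * ‖φ ξ‖) :
    (∀ v, IntegrableOn (fun p ↦ transportKernel σ ω k v p • 𝓕 φ p.2)
        (Ioi (0 : ℝ) ×ˢ (univ : Set V))) ∧
      ContDiff ℝ N (resolventIntegral σ ω k (𝓕 φ)) ∧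
      ∀ v, (ω + I * ⟪k, v⟫) • resolventIntegral σ ω k (𝓕 φ) v -
        σ • Δ (resolventIntegral σ ω k (𝓕 φ)) v = 𝓕 φ v := by
  have hφ : Integrable φ := (integrable_norm_iff hmeas).1 (by simpa using hmoment 0 bot_le)
  refine ⟨fun v ↦ ?_, ?_, resolvent_equation hσ hω k hφ fun n hn ↦
    hmoment n (hN.trans' (by exact_mod_cast hn))⟩
  · rw [IntegrableOn, volume_restrict_Ioi_prod_univ]
    exact integrable_transportKernel_smul_fourier hσ hω k v hφ
  · rw [resolventIntegral_fourier hσ hω k hφ]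
    exact VectorFourier.contDiff_fourierIntegral _ fun n hn ↦
      integrable_norm_pow_mul_dampingFactor_smul hσ.le hω k hφ (hmoment n hn)

theorem greenKer_eq_transportKernel_smul (d : ℕ) (σ : ℝ) (ω : ℂ) (k : EuclideanSpace ℝ (Fin d))
    (h : EuclideanSpace ℝ (Fin d) → ℂ) (v : EuclideanSpace ℝ (Fin d)) :
    greenKer d σ ω k h v = fun p ↦ transportKernel σ ω k v p • h p.2 := by
  ext p
  rw [greenKer, transportKernel, ofReal_heatKernel, finrank_euclideanSpace_fin, ← mul_assoc 4,
    sub_eq_add_neg _ (_ / (4 * _ * _)), Complex.exp_add, smul_eq_mul]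
  push_cast
  ring_nf

theorem greenSol_eq_resolventIntegral (d : ℕ) (σ : ℝ) (ω : ℂ) (k : EuclideanSpace ℝ (Fin d))
    (h : EuclideanSpace ℝ (Fin d) → ℂ) : greenSol d σ ω k h = resolventIntegral σ ω k h := by
  ext v
  rw [greenSol, greenKer_eq_transportKernel_smul, resolventIntegral]

theorem lapC_eq_laplacian {d : ℕ} {f : EuclideanSpace ℝ (Fin d) → ℂ} (hf : ContDiff ℝ 2 f) :
    lapC f = Δ f := by
  ext v
  have hdiff : DifferentiableAt ℝ (fderiv ℝ f) v :=
    (hf.fderiv_right (m := 1) (by norm_num)).differentiable one_ne_zero v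
  simp [lapC, laplacian_eq_iteratedFDeriv_orthonormalBasis f (EuclideanSpace.basisFun (Fin d) ℝ),
    iteratedFDeriv_two_apply, fderiv_clm_apply hdiff (differentiableAt_const _)]

/-- Green's function representation for the resolvent of `i k·v − σΔ`: the double
integral converges absolutely, defines a `C²` function `u`, and
`ω u + i (k·v) u − σ Δu = h`. -/
theorem stmt6 (d : ℕ) (hd : 1 ≤ d) (σ : ℝ) (hσ : 0 < σ) (ω : ℂ) (hω : 0 < ω.re)
    (k : EuclideanSpace ℝ (Fin d)) (h : EuclideanSpace ℝ (Fin d) → ℂ)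
    (hsm : ContDiff ℝ (⊤ : ℕ∞) h) (hsupp : HasCompactSupport h) :
    (∀ v, IntegrableOn (greenKer d σ ω k h v)
        (Set.Ioi (0 : ℝ) ×ˢ (Set.univ : Set (EuclideanSpace ℝ (Fin d)))) volume) ∧
    ContDiff ℝ 2 (greenSol d σ ω k h) ∧
    ∀ v, ω * greenSol d σ ω k h v
        + Complex.I * ((⟪k, v⟫ : ℝ) : ℂ) * greenSol d σ ω k h v
        - (σ : ℂ) * lapC (greenSol d σ ω k h) v = h v := by
  obtain ⟨φ, rfl⟩ := exists_schwartzMap_fourier_eq hsm hsupp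
  obtain ⟨hint, hcontDiff, hequation⟩ := stmt6_general (N := 2) le_rfl hσ hω k
    φ.continuous.aestronglyMeasurable fun n _ ↦ φ.integrable_pow_mul volume n
  simp only [greenKer_eq_transportKernel_smul, greenSol_eq_resolventIntegral,
    lapC_eq_laplacian hcontDiff, ← add_mul]
  exact ⟨hint, hcontDiff, hequation⟩
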